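/- arXiv:2202.01278 — 4 statements merged into one kernel-verified Lean document; each statement's English description precedes it below -/
import Mathlib

section
/- Let m ∈ ℕ and let α, β ∈ ℝ satisfy β > 0, α+1−m > 0, and α+1−m−β ∉ {0,1,…,m−1}, and let n ≥ m; write δ = α+1. Let w_1,…,w_m ∈ ℂ list the roots of P_m^{(−α−1,β−1)} with multiplicity (so P_m^{(−α−1,β−1)}(X) = c·∏_{j=1}^m (X−w_j) with c its leading coefficient), and let v_1,…,v_{n−m} ∈ ℂ list the roots of P_{n−m}^{(α+1,β−1)} with multiplicity similarly. Set W_j = w_j for 1 ≤ j ≤ m and W_{m+j} = v_j for 1 ≤ j ≤ n−m. For x ∈ ℂ let M(x) be the (n+1)×(n+1) matrix whose j-th row, for 1 ≤ j ≤ n, is (1, W_j, W_j², …, W_j^n), and whose last row has k-th entry (−1)^k·k!·R_k(x;β)/β^{(k+1)} for k = 0,1,…,n. Then for every x ∈ ℂ, n!·(δ+n−m)·(∏_{1≤i<j≤n}(W_j−W_i))·P^{(α,β)}_{m,n}(x) = (−1)^m·2^{−n}·C(n,m)·(n+δ−2m)·(n+β)·[(β−δ+m)(β−δ+m+1)⋯(β−δ+2m−1)]·[(δ+β+n−m)(δ+β+n−m+1)⋯(δ+β+2(n−m)−1)]·det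 M(x), where the two bracketed products equal Γ(β−δ+2m)/Γ(β−δ+m) and Γ(δ+β+2(n−m))/Γ(δ+β+n−m) respectively; moreover the points W_1,…,W_n are pairwise distinct, so the Vandermonde factor is nonzero. -/
open Finset

/-- Jacobi polynomial `P_n^{(α,β)}(x)` evaluated at complex `x`, with the
convention `P_n^{(α,β)} = 0` for negative integer index `n`. -/
noncomputable def jacobiC (α β : ℝ) (n : ℤ) (x : ℂ) : ℂ :=
  if 0 ≤ n then
    (Nat.factorial n.toNat : ℂ)⁻¹ *
      ∑ k ∈ Finset.range (n.toNat + 1),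
        (n.toNat.choose k : ℂ) *
          (∏ i ∈ Finset.Ico k n.toNat, ((α : ℂ) + i + 1)) *
          (∏ i ∈ Finset.range k, ((α : ℂ) + β + ((n : ℤ) : ℂ) + 1 + i)) *
          ((x - 1) / 2) ^ k
  else 0

/-- Exceptional `X_m`-Jacobi polynomial (complex variable). -/
noncomputable def XJacC (m : ℕ) (α β : ℝ) (n : ℕ) (x : ℂ) : ℂ :=
  ((-1 : ℂ) ^ m / ((α : ℂ) + 1 + n - m)) *
    ((x - 1) * (1 + (α : ℂ) + β + n - m) / 2 *
        jacobiC (-α - 1) (β - 1) (m : ℤ) x * jacobiC (α + 2) β ((n : ℤ) - m - 1) x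
      + ((α : ℂ) + 1 - m) * jacobiC (-α - 2) β (m : ℤ) x * jacobiC (α + 1) (β - 1) ((n : ℤ) - m) x)

/-- Pochhammer symbol `a^{(j)} = a(a+1)⋯(a+j-1)`. -/
noncomputable def poch (a : ℂ) (j : ℕ) : ℂ :=
  ∏ i ∈ Finset.range j, (a + i)

/-- Partial sums `R_k(x;β) = ∑_{j=0}^k β^{(j)}(−x)^j/j!`. -/
noncomputable def Rpartial (k : ℕ) (x : ℂ) (β : ℝ) : ℂ :=
  ∑ j ∈ Finset.range (k + 1), poch (β : ℂ) j * (-x) ^ j / (Nat.factorial j)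

set_option linter.unusedSimpArgs false

/-- coefficients of the Jacobi polynomial in `t = (x-1)/2`. -/
noncomputable def jcf (a b : ℝ) (N k : ℕ) : ℝ :=
  (N.factorial : ℝ)⁻¹ * ((N.choose k : ℝ) * (∏ i ∈ Finset.Ico k N, (a + i + 1)) *
    (∏ i ∈ Finset.range k, (a + b + N + 1 + i)))

noncomputable def jp (a b : ℝ) (N : ℕ) : Polynomial ℝ :=
  ∑ k ∈ Finset.range (N + 1), Polynomial.C (jcf a b N k) * Polynomial.X ^ k

theorem jcf_zero_of_lt (a b : ℝ) {N k : ℕ} (h : N < k) : jcf a b N k = 0 := by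
  simp [jcf, Nat.choose_eq_zero_of_lt h]

theorem jp_coeff (a b : ℝ) (N k : ℕ) : (jp a b N).coeff k = jcf a b N k := by
  simp only [jp, Polynomial.finsetSum_coeff, Polynomial.coeff_C_mul, Polynomial.coeff_X_pow]
  simp only [mul_ite, mul_one, mul_zero, Finset.sum_ite_eq, Finset.mem_range]
  split_ifs with h
  · rfl
  · rw [jcf_zero_of_lt]; omega

theorem jcf_rec (a b : ℝ) (N k : ℕ) :
    ((k : ℝ) + 1) * (k + a + 1) * jcf a b N (k + 1) =
      ((N : ℝ) - k) * (N + k + a + b + 1) * jcf a b N k := by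
  rcases lt_trichotomy k N with h | h | h
  · have h1 : ((N.choose (k+1) : ℕ) : ℝ) * (k + 1) = N.choose k * ((N : ℝ) - k) := by
      have := Nat.choose_succ_right_eq N k
      rw [← Nat.cast_sub h.le]
      exact_mod_cast this
    unfold jcf
    rw [Finset.prod_range_succ, Finset.prod_eq_prod_Ico_succ_bot h]
    generalize (∏ i ∈ Finset.Ico (k + 1) N, (a + i + 1)) = Q
    generalize (∏ i ∈ Finset.range k, (a + b + N + 1 + i)) = R
    linear_combination ((N.factorial : ℝ)⁻¹ * (k + a + 1) * Q * R * (a + b + N + 1 + k)) * h1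
  · subst h
    rw [jcf_zero_of_lt a b (Nat.lt_succ_self k)]; simp
  · rw [jcf_zero_of_lt a b h, jcf_zero_of_lt a b (by omega : N < k + 1)]; simp

open Polynomial in
theorem jp_ode (a b : ℝ) (N : ℕ) :
    X * (X + 1) * derivative (derivative (jp a b N)) +
      (C (a + 1) + C (a + b + 2) * X) * derivative (jp a b N) =
      C ((N : ℝ) * (N + a + b + 1)) * jp a b N := by
  have e : X * (X + 1) * derivative (derivative (jp a b N)) +
      (C (a + 1) + C (a + b + 2) * X) * derivative (jp a b N) =
      X * (X * derivative (derivative (jp a b N))) + X * derivative (derivative (jp a b N))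
      + C (a+1) * derivative (jp a b N) + C (a + b + 2) * (X * derivative (jp a b N)) := by ring
  rw [e]
  ext k
  have := jcf_rec a b N k
  rcases k with _ | _ | k
  · simp only [coeff_add, coeff_C_mul, coeff_X_mul, coeff_X_mul_zero, coeff_derivative, jp_coeff, Nat.cast_add, Nat.cast_one, Nat.cast_zero, zero_add] at this ⊢
    linear_combination this
  · simp only [coeff_add, coeff_C_mul, coeff_X_mul, coeff_X_mul_zero, coeff_derivative, jp_coeff, Nat.cast_add, Nat.cast_one, Nat.cast_zero, zero_add] at this ⊢
    linear_combination this
  · simp only [coeff_add, coeff_C_mul, coeff_X_mul, coeff_X_mul_zero, coeff_derivative, jp_coeff, Nat.cast_add, Nat.cast_one, Nat.cast_zero, zero_add] at this ⊢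
    linear_combination this

theorem jcf_deriv (a b : ℝ) (N k : ℕ) :
    ((k : ℝ) + 1) * jcf a b (N + 1) (k + 1) =
      ((N : ℝ) + 1 + a + b + 1) * jcf (a + 1) (b + 1) N k := by
  have h1 : ((N.choose k : ℕ) : ℝ) * (N + 1) = (N + 1).choose (k + 1) * ((k : ℝ) + 1) := by
    have := Nat.add_one_mul_choose_eq N k
    have h : (((N + 1) * N.choose k : ℕ) : ℝ) = (((N+1).choose (k+1) * (k+1) : ℕ) : ℝ) := by
      exact_mod_cast this
    push_cast at h
    linear_combination h
  unfold jcf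
  rw [Finset.prod_range_succ', ← Finset.prod_Ico_add' (fun i : ℕ => a + (i:ℝ) + 1) k N 1]
  have e1 : (∏ i ∈ Finset.Ico k N, (a + ((i + 1 : ℕ) : ℝ) + 1)) =
      ∏ i ∈ Finset.Ico k N, (a + 1 + (i : ℝ) + 1) :=
    Finset.prod_congr rfl fun i _ => by push_cast; ring
  have e2 : (∏ i ∈ Finset.range k, (a + b + ((N + 1 : ℕ) : ℝ) + 1 + ((i + 1 : ℕ) : ℝ))) =
      ∏ i ∈ Finset.range k, (a + 1 + (b + 1) + (N : ℝ) + 1 + (i : ℝ)) :=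
    Finset.prod_congr rfl fun i _ => by push_cast; ring
  rw [e1, e2, Nat.factorial_succ]
  generalize (∏ i ∈ Finset.Ico k N, (a + 1 + (i : ℝ) + 1)) = Q
  generalize (∏ i ∈ Finset.range k, (a + 1 + (b + 1) + (N : ℝ) + 1 + (i : ℝ))) = R
  have hN : ((N : ℝ) + 1) ≠ 0 := by positivity
  have hF : (N.factorial : ℝ) ≠ 0 := by positivity
  push_cast
  field_simp
  linear_combination (-Q * R * (a + b + (N + 1) + 1)) * h1

open Polynomial in
theorem jp_deriv (a b : ℝ) (N : ℕ) :
    derivative (jp a b (N + 1)) = C ((N : ℝ) + 1 + a + b + 1) * jp (a + 1) (b + 1) N := by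
  ext k
  rw [coeff_derivative, coeff_C_mul, jp_coeff, jp_coeff, ← jcf_deriv]
  ring

theorem jcf_contig (a b : ℝ) (N k : ℕ) :
    ((k : ℝ) + a) * jcf a b N k = (N + a) * jcf (a - 1) (b + 1) N k := by
  rcases le_or_gt k N with h | h
  · have key : ((k : ℝ) + a) * (∏ i ∈ Finset.Ico k N, (a + i + 1)) =
        (N + a) * ∏ i ∈ Finset.Ico k N, (a - 1 + i + 1) := by
      have h1 := Finset.prod_Ico_succ_top h (fun i : ℕ => a + (i : ℝ))
      have h2 := Finset.prod_eq_prod_Ico_succ_bot (Nat.lt_succ_of_le h) (fun i : ℕ => a + (i : ℝ))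
      rw [Nat.succ_eq_add_one, h1, ← Finset.prod_Ico_add' (fun i : ℕ => a + (i:ℝ)) k N 1] at h2
      have e1 : (∏ i ∈ Finset.Ico k N, (a + ((i + 1 : ℕ) : ℝ))) =
          ∏ i ∈ Finset.Ico k N, (a + (i : ℝ) + 1) :=
        Finset.prod_congr rfl fun i _ => by push_cast; ring
      have e2 : (∏ i ∈ Finset.Ico k N, (a - 1 + (i : ℝ) + 1)) =
          ∏ i ∈ Finset.Ico k N, (a + (i : ℝ)) :=
        Finset.prod_congr rfl fun i _ => by ring
      rw [e1] at h2
      rw [e2]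
      linear_combination -h2
    unfold jcf
    have e : a - 1 + (b + 1) = a + b := by ring
    rw [e]
    linear_combination ((N.factorial : ℝ)⁻¹ * (N.choose k : ℝ) *
      (∏ i ∈ Finset.range k, (a + b + N + 1 + i))) * key
  · rw [jcf_zero_of_lt _ _ h, jcf_zero_of_lt _ _ h]; simp

open Polynomial in
theorem jp_contig (a b : ℝ) (N : ℕ) :
    X * derivative (jp a b N) + C a * jp a b N = C ((N : ℝ) + a) * jp (a - 1) (b + 1) N := by
  ext k
  have := jcf_contig a b N k
  rcases k with _ | k
  · simp only [coeff_add, coeff_C_mul, coeff_X_mul, coeff_X_mul_zero, coeff_derivative, jp_coeff, Nat.cast_add, Nat.cast_one, Nat.cast_zero, zero_add] at this ⊢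
    linear_combination this
  · simp only [coeff_add, coeff_C_mul, coeff_X_mul, coeff_X_mul_zero, coeff_derivative, jp_coeff, Nat.cast_add, Nat.cast_one, Nat.cast_zero, zero_add] at this ⊢
    linear_combination this

theorem jacobiC_eq (a b : ℝ) (N : ℕ) (x : ℂ) :
    jacobiC a b (N : ℤ) x = ((jp a b N).map Complex.ofRealHom).eval ((x - 1) / 2) := by
  rw [Polynomial.eval_map, jp, Polynomial.eval₂_finsetSum]
  simp only [Polynomial.eval₂_mul, Polynomial.eval₂_C, Polynomial.eval₂_X_pow]
  simp [jacobiC, jcf, Finset.mul_sum, mul_assoc]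

theorem jp_eval_zero (a b : ℝ) (N : ℕ) :
    (jp a b N).eval 0 = (N.factorial : ℝ)⁻¹ * ∏ i ∈ Finset.range N, (a + i + 1) := by
  rw [← Polynomial.coeff_zero_eq_eval_zero, jp_coeff, jcf]
  simp

theorem jp_eval_neg_one (N : ℕ) : ∀ (a b : ℝ), -1 < b →
    (∀ k : ℕ, k < N → (N : ℝ) + a + b + 1 + k ≠ 0) → 0 < (-1) ^ N * (jp a b N).eval (-1) := by
  induction N with
  | zero => intro a b hb _; simp [jp, jcf]
  | succ N ih =>
    intro a b hb h
    have h0 := h 0 (by omega)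
    have h1 := ih (a + 1) (b + 1) (by linarith) (fun k hk => by
      have := h (k + 1) (by omega)
      push_cast at this
      intro h'
      apply this
      linarith)
    have ode := congrArg (Polynomial.eval (-1)) (jp_ode a b (N + 1))
    rw [jp_deriv] at ode
    simp at ode h0
    have h2 : -(b + 1) * (jp (a + 1) (b + 1) N).eval (-1) =
        (N + 1) * (jp a b (N + 1)).eval (-1) := by
      apply mul_left_cancel₀ h0
      linear_combination ode
    have h3 : (b + 1) * ((-1) ^ N * (jp (a + 1) (b + 1) N).eval (-1)) =
        (N + 1) * ((-1) ^ (N + 1) * (jp a b (N + 1)).eval (-1)) := by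
      rw [pow_succ]
      linear_combination (-1 : ℝ) ^ (N + 1) * h2
    have h4 : 0 < (b + 1) * ((-1) ^ N * (jp (a + 1) (b + 1) N).eval (-1)) :=
      mul_pos (by linarith) h1
    rw [h3] at h4
    exact (mul_pos_iff_of_pos_left (by positivity)).1 h4

theorem jp_sign (N : ℕ) : ∀ (a b : ℝ), -1 < b → a < -N →
    (∀ k : ℕ, k < N → (N : ℝ) + a + b + 1 + k ≠ 0) → ∀ t ∈ Set.Icc (-1 : ℝ) 0,
      0 < (-1) ^ N * (jp a b N).eval t := by
  induction N with
  | zero => intro a b hb _ _ t _; simp [jp, jcf]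
  | succ N ih =>
    intro a b hb ha h t ht
    push_cast at ha
    have h1 := ih (a + 1) (b + 1) (by linarith) (by linarith) (fun k hk => by
      have := h (k + 1) (by omega)
      push_cast at this
      intro h'
      apply this
      linarith)
    have hm1 := jp_eval_neg_one (N + 1) a b hb h
    have h0 : 0 < (-1) ^ (N + 1) * (jp a b (N + 1)).eval 0 := by
      rw [jp_eval_zero, mul_left_comm]
      apply mul_pos (by positivity)
      have : (-1 : ℝ) ^ (N + 1) * ∏ i ∈ Finset.range (N + 1), (a + i + 1) =
          ∏ i ∈ Finset.range (N + 1), (-(a + i + 1)) := by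
        rw [Finset.prod_neg]; simp
      rw [this]
      apply Finset.prod_pos
      intro i hi
      have : (i : ℝ) ≤ N := by exact_mod_cast Nat.lt_succ_iff.1 (Finset.mem_range.1 hi)
      linarith
    set f : ℝ → ℝ := fun s => (-1) ^ (N + 1) * (jp a b (N + 1)).eval s with hf
    have hd : ∀ s, HasDerivAt f (-((N : ℝ) + 1 + a + b + 1) *
        ((-1) ^ N * (jp (a + 1) (b + 1) N).eval s)) s := by
      intro s
      have := ((jp a b (N + 1)).hasDerivAt s).const_mul ((-1 : ℝ) ^ (N + 1))
      rw [jp_deriv] at this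
      refine this.congr_deriv ?_
      rw [Polynomial.eval_mul, Polynomial.eval_C]
      ring
    have hc : ContinuousOn f (Set.Icc (-1) 0) := fun s _ => (hd s).continuousAt.continuousWithinAt
    have hl : (-1 : ℝ) ∈ Set.Icc (-1 : ℝ) 0 := by constructor <;> norm_num
    have hr : (0 : ℝ) ∈ Set.Icc (-1 : ℝ) 0 := by constructor <;> norm_num
    rcases le_total 0 ((N : ℝ) + 1 + a + b + 1) with hs | hs
    · have : AntitoneOn f (Set.Icc (-1) 0) := by
        apply antitoneOn_of_deriv_nonpos (convex_Icc _ _) hc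
        · exact fun s _ => (hd s).differentiableAt.differentiableWithinAt
        · intro s hs'
          rw [(hd s).deriv]
          have := h1 s (interior_subset hs')
          nlinarith
      exact h0.trans_le (this ht hr ht.2)
    · have : MonotoneOn f (Set.Icc (-1) 0) := by
        apply monotoneOn_of_deriv_nonneg (convex_Icc _ _) hc
        · exact fun s _ => (hd s).differentiableAt.differentiableWithinAt
        · intro s hs'
          rw [(hd s).deriv]
          have := h1 s (interior_subset hs')
          nlinarith
      exact hm1.trans_le (this hl ht ht.1)

section rootsLemmas
open Polynomial

theorem eq_zero_of_deriv_root (Q : ℂ[X]) (z : ℂ) (h : derivative Q = 0) (hz : Q.eval z = 0) :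
    Q = 0 := by
  have h1 := derivative_eq_zero.1 h
  rw [eq_C_of_natDegree_eq_zero h1] at hz ⊢
  simpa using hz

theorem ode_simple (P : ℂ[X]) (p q l z : ℂ)
    (ode : X * (X + 1) * derivative (derivative P) + (C p + C q * X) * derivative P = C l * P)
    (hP : P ≠ 0) (hz : z ≠ 0) (hz1 : z + 1 ≠ 0) (h0 : P.eval z = 0) :
    (derivative P).eval z ≠ 0 := by
  intro h1
  have hr : 1 < P.rootMultiplicity z := (one_lt_rootMultiplicity_iff_isRoot hP).2 ⟨h0, h1⟩
  have hr1 : (derivative P).rootMultiplicity z = P.rootMultiplicity z - 1 :=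
    derivative_rootMultiplicity_of_root h0
  have hr2 : (derivative (derivative P)).rootMultiplicity z = P.rootMultiplicity z - 1 - 1 := by
    rw [← hr1]; exact derivative_rootMultiplicity_of_root h1
  have hne : derivative (derivative P) ≠ 0 := fun h =>
    hP (eq_zero_of_deriv_root P z (eq_zero_of_deriv_root _ z h h1) h0)
  have d1 : (X - C z) ^ (P.rootMultiplicity z - 1) ∣ derivative P := by
    rw [← hr1]; exact pow_rootMultiplicity_dvd _ _
  have d0 : (X - C z) ^ (P.rootMultiplicity z - 1) ∣ P :=
    (pow_dvd_pow _ (Nat.sub_le _ _)).trans (pow_rootMultiplicity_dvd P z)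
  have d2 : (X - C z) ^ (P.rootMultiplicity z - 1) ∣ X * (X + 1) * derivative (derivative P) := by
    have : X * (X + 1) * derivative (derivative P) = C l * P - (C p + C q * X) * derivative P := by
      rw [← ode]; ring
    rw [this]
    exact dvd_sub (d0.mul_left _) (d1.mul_left _)
  have d3 := (prime_X_sub_C z).pow_dvd_of_dvd_mul_left _ (by
    rw [dvd_iff_isRoot]
    simp [hz, hz1]) d2
  have := (le_rootMultiplicity_iff hne).2 d3
  omega

theorem prod_inj {N : ℕ} (c : ℂ) (u : Fin N → ℂ)
    (h : ∀ i, (derivative (C c * ∏ j, (X - C (u j)))).eval (u i) ≠ 0) : Function.Injective u := by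
  intro i j hij
  by_contra hne
  apply h i
  rw [← Finset.mul_prod_erase Finset.univ _ (Finset.mem_univ i),
    ← Finset.mul_prod_erase (Finset.univ.erase i) _
      (Finset.mem_erase.2 ⟨Ne.symm hne, Finset.mem_univ j⟩), ← hij]
  simp [derivative_mul]

theorem electro {N : ℕ} (c : ℂ) (u : Fin N → ℂ) (a b : ℝ) (l : ℂ) (ha : 0 < a) (hb : 0 < b)
    (P : ℂ[X]) (hPu : P = C c * ∏ j, (X - C (u j)))
    (ode : X * (X + 1) * derivative (derivative P) + (C (a : ℂ) + C ((a : ℂ) + b) * X) * derivative P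
      = C l * P)
    (h : ∀ i, (derivative P).eval (u i) ≠ 0) (h0 : ∀ i, u i ≠ 0) (h1 : ∀ i, u i + 1 ≠ 0)
    (w : ℂ) (j : Fin N) : (w * u j).re ≤ max 0 (-w.re) := by
  by_contra hcon
  push Not at hcon
  obtain ⟨i, -, hi⟩ := Finset.exists_max_image Finset.univ (fun j => (w * u j).re)
    ⟨j, Finset.mem_univ j⟩
  have hinj : Function.Injective u := prod_inj c u (by rw [← hPu]; exact h)
  have hj := hi j (Finset.mem_univ j)
  rw [max_lt_iff] at hcon
  set z := u i with hz
  set R : ℂ[X] := ∏ j ∈ Finset.univ.erase i, (X - C (u j)) with hR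
  have hP : P = C c * ((X - C z) * R) := by
    rw [hPu, ← Finset.mul_prod_erase Finset.univ _ (Finset.mem_univ i)]
  have e1 : (derivative P).eval z = c * R.eval z := by
    rw [hP]; simp [derivative_mul]
  have e2 : (derivative (derivative P)).eval z = c * (2 * (derivative R).eval z) := by
    rw [hP]; simp only [derivative_mul, derivative_add, derivative_sub, derivative_C, derivative_X, eval_add, eval_mul, eval_sub, eval_C, eval_X, eval_zero, eval_one, derivative_one, derivative_zero]; ring
  have e0 : P.eval z = 0 := by rw [hP]; simp
  have hcR : c * R.eval z ≠ 0 := by rw [← e1]; exact h i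
  have hc : c ≠ 0 := left_ne_zero_of_mul hcR
  have hRz : R.eval z ≠ 0 := right_ne_zero_of_mul hcR
  have hne : ∀ k ∈ Finset.univ.erase i, z - u k ≠ 0 := by
    intro k hk
    rw [sub_ne_zero]
    intro h'
    exact (Finset.mem_erase.1 hk).1 (hinj h').symm
  have e3 : (derivative R).eval z = R.eval z * ∑ k ∈ Finset.univ.erase i, (z - u k)⁻¹ := by
    rw [hR, derivative_prod_finset, eval_finsetSum, Finset.mul_sum]
    refine Finset.sum_congr rfl fun k hk => ?_
    rw [← Finset.mul_prod_erase (Finset.univ.erase i) _ hk]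
    simp
    field_simp [hne k hk]
  have ev := congrArg (eval z) ode
  simp only [eval_add, eval_mul, eval_X, eval_one, eval_C, e0, e1, e2, e3] at ev
  have hz0 := h0 i
  have hz1 := h1 i
  rw [← hz] at hz0 hz1
  have key : 2 * (∑ k ∈ Finset.univ.erase i, (z - u k)⁻¹) + a * z⁻¹ + b * (z + 1)⁻¹ = 0 := by
    apply mul_left_cancel₀ hcR
    apply mul_left_cancel₀ (mul_ne_zero hz0 hz1)
    generalize (∑ k ∈ Finset.univ.erase i, (z - u k)⁻¹) = S at ev
    have q1 : z * z⁻¹ = 1 := mul_inv_cancel₀ hz0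
    have q2 : (z + 1) * (z + 1)⁻¹ = 1 := mul_inv_cancel₀ hz1
    linear_combination ev + (c * R.eval z * (z + 1) * a) * q1 + (c * R.eval z * z * b) * q2
  have hre : ∀ y : ℂ, ((starRingEnd ℂ) w * y⁻¹).re = (w * y).re / Complex.normSq y := by
    intro y
    rw [Complex.inv_def]
    simp
    ring
  have key2 := congrArg (fun y => ((starRingEnd ℂ) w * y).re) key
  have split : (starRingEnd ℂ) w *
      (2 * (∑ k ∈ Finset.univ.erase i, (z - u k)⁻¹) + a * z⁻¹ + b * (z + 1)⁻¹) =
      ((2 : ℝ) : ℂ) * (∑ k ∈ Finset.univ.erase i, (starRingEnd ℂ) w * (z - u k)⁻¹) +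
      a * ((starRingEnd ℂ) w * z⁻¹) + b * ((starRingEnd ℂ) w * (z + 1)⁻¹) := by
    rw [← Finset.mul_sum]; push_cast; ring
  simp only [split] at key2
  rw [Complex.add_re, Complex.add_re, Complex.re_ofReal_mul, Complex.re_ofReal_mul,
    Complex.re_ofReal_mul, Complex.re_sum] at key2
  simp only [hre] at key2
  have s1 : 0 ≤ ∑ k ∈ Finset.univ.erase i, (w * (z - u k)).re / Complex.normSq (z - u k) := by
    apply Finset.sum_nonneg
    intro k _
    apply div_nonneg _ (Complex.normSq_nonneg _)
    rw [mul_sub, Complex.sub_re]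
    have := hi k (Finset.mem_univ k)
    linarith
  have s2 : 0 < (w * z).re / Complex.normSq z :=
    div_pos (by linarith [hcon.1]) (Complex.normSq_pos.2 hz0)
  have s3 : 0 < (w * (z + 1)).re / Complex.normSq (z + 1) := by
    apply div_pos _ (Complex.normSq_pos.2 hz1)
    rw [mul_add, mul_one, Complex.add_re]
    linarith [hcon.2]
  have s4 := mul_pos ha s2
  have s5 := mul_pos hb s3
  rw [mul_zero, Complex.zero_re] at key2
  linarith

theorem real_of_bound (z : ℂ) (h : ∀ w : ℂ, (w * z).re ≤ max 0 (-w.re)) :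
    ∃ t ∈ Set.Icc (-1 : ℝ) 0, z = (t : ℂ) := by
  have h1 := h Complex.I
  have h2 := h (-Complex.I)
  have h3 := h 1
  have h4 := h (-1)
  simp at h1 h2 h3 h4
  refine ⟨z.re, ⟨by linarith, h3⟩, ?_⟩
  apply Complex.ext
  · simp
  · simp; linarith

theorem det_functional (n : ℕ) (W : Fin n → ℂ) (L : ℂ[X] →ₗ[ℂ] ℂ) :
    (Matrix.of fun (i k : Fin (n + 1)) =>
      if h : (i : ℕ) < n then (W ⟨i, h⟩) ^ (k : ℕ) else L (X ^ (k : ℕ))).det =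
      (∏ i : Fin n, ∏ j ∈ Finset.Ioi i, (W j - W i)) * L (∏ j, (X - C (W j))) := by
  set A := (Matrix.of fun (i k : Fin (n + 1)) =>
      if h : (i : ℕ) < n then (W ⟨i, h⟩) ^ (k : ℕ) else L (X ^ (k : ℕ))) with hA
  set q : ℂ[X] := ∏ j, (X - C (W j)) with hq
  have hqm : q.Monic := monic_prod_of_monic _ _ fun j _ => monic_X_sub_C _
  have hqd : q.natDegree = n := by
    rw [hq, natDegree_finsetProd_X_sub_C_eq_card]; simp
  let p : Fin (n + 1) → ℂ[X] := fun j => if (j : ℕ) < n then X ^ (j : ℕ) else q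
  have hpd : ∀ j, (p j).natDegree = j := by
    intro j
    simp only [p]
    split_ifs with h
    · simp
    · rw [hqd]; omega
  have hpm : ∀ j, (p j).Monic := by
    intro j
    simp only [p]
    split_ifs with h
    · exact monic_X_pow _
    · exact hqm
  have hU := Matrix.det_matrixOfPolynomials p hpd hpm
  set U := (Matrix.of (fun (i j : Fin (n + 1)) => (p j).coeff i)) with hUdef
  have hsum : ∀ j, p j = ∑ k : Fin (n + 1), C ((p j).coeff k) * X ^ (k : ℕ) := by
    intro j
    conv_lhs => rw [as_sum_range_C_mul_X_pow' (p j) (n := n + 1) (by rw [hpd]; exact j.2)]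
    rw [Finset.sum_range]
  have hAU : A * U = Matrix.of fun (i j : Fin (n + 1)) =>
      if h : (i : ℕ) < n then (p j).eval (W ⟨i, h⟩) else L (p j) := by
    ext i j
    rw [Matrix.mul_apply]
    simp only [hA, hUdef, Matrix.of_apply]
    split_ifs with h
    · conv_rhs => rw [hsum j]
      rw [eval_finsetSum]
      exact Finset.sum_congr rfl fun k _ => by
        rw [eval_mul, eval_C, eval_pow, eval_X, mul_comm]
    · conv_rhs => rw [hsum j]
      rw [map_sum]
      refine Finset.sum_congr rfl fun k _ => ?_
      rw [← smul_eq_C_mul, map_smul, smul_eq_mul, mul_comm]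
  have hdet : A.det = (A * U).det := by rw [Matrix.det_mul, hU, mul_one]
  rw [hdet, hAU, Matrix.det_succ_column _ (Fin.last n), Fin.sum_univ_castSucc]
  rw [Finset.sum_eq_zero]
  · rw [← Matrix.det_vandermonde]
    have : (Matrix.submatrix (Matrix.of fun (i j : Fin (n + 1)) =>
      if h : (i : ℕ) < n then (p j).eval (W ⟨i, h⟩) else L (p j)) (Fin.last n).succAbove
        (Fin.last n).succAbove) = Matrix.vandermonde W := by
      ext i j
      simp [p, Matrix.vandermonde]
    rw [this]
    simp [p, ← two_mul, mul_comm]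
  · intro i _
    have : eval (W i) q = 0 := by
      rw [hq, eval_prod]
      exact Finset.prod_eq_zero (Finset.mem_univ i) (by simp)
    simp [p, this]

/-- the values of the functional on monomials -/
noncomputable def muk (β : ℝ) (x : ℂ) (k : ℕ) : ℂ :=
  (-1 : ℂ) ^ k * (Nat.factorial k : ℂ) * Rpartial k x β / poch (β : ℂ) (k + 1)

noncomputable def Lx (β : ℝ) (x : ℂ) : ℂ[X] →ₗ[ℂ] ℂ :=
  Polynomial.lsum fun k => LinearMap.toSpanSingleton ℂ ℂ (muk β x k)

theorem Lx_monomial (β : ℝ) (x : ℂ) (k : ℕ) (r : ℂ) :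
    Lx β x (monomial k r) = r * muk β x k := by
  simp [Lx, Polynomial.lsum_apply, sum_monomial_index]

theorem Lx_X_pow (β : ℝ) (x : ℂ) (k : ℕ) : Lx β x (X ^ k) = muk β x k := by
  rw [X_pow_eq_monomial, Lx_monomial, one_mul]

theorem poch_ne (β : ℝ) (hβ : 0 < β) (k : ℕ) : poch (β : ℂ) k ≠ 0 := by
  rw [poch, Finset.prod_ne_zero_iff]
  intro i _
  have : β + (i : ℝ) ≠ 0 := by positivity
  exact_mod_cast this

theorem muk_rec (β : ℝ) (hβ : 0 < β) (x : ℂ) (k : ℕ) :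
    ((k : ℂ) + 1 + β) * muk β x (k + 1) + (k + 1) * muk β x k = x ^ (k + 1) := by
  have p0 := poch_ne β hβ (k + 1)
  have p1 := poch_ne β hβ (k + 2)
  have hp : poch (β : ℂ) (k + 2) = poch (β : ℂ) (k + 1) * (β + ((k + 1 : ℕ) : ℂ)) :=
    Finset.prod_range_succ _ _
  have hR : Rpartial (k + 1) x β = Rpartial k x β +
      poch (β : ℂ) (k + 1) * (-x) ^ (k + 1) / (Nat.factorial (k + 1)) :=
    Finset.sum_range_succ _ _
  rw [hp] at p1
  have p2 := right_ne_zero_of_mul p1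
  have hf : ((Nat.factorial k : ℕ) : ℂ) ≠ 0 := by exact_mod_cast (Nat.factorial_pos k).ne'
  have hk : ((k : ℂ) + 1) ≠ 0 := by exact_mod_cast (Nat.succ_ne_zero k)
  have hs : (-1 : ℂ) ^ (k + 1) * (-x) ^ (k + 1) = x ^ (k + 1) := by
    rw [← mul_pow]; ring
  rw [← hs]
  unfold muk
  rw [show k + 1 + 1 = k + 2 from rfl, hp, hR, Nat.factorial_succ]
  push_cast at p2 ⊢
  field_simp
  ring

theorem Lx_ode (β : ℝ) (hβ : 0 < β) (x : ℂ) (y : ℂ[X]) :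
    Lx β x ((1 + X) * derivative y + C (β : ℂ) * y) = y.eval x := by
  induction y using Polynomial.induction_on' with
  | add p q hp hq =>
    have e : (1 + X) * derivative (p + q) + C (β : ℂ) * (p + q) =
        ((1 + X) * derivative p + C (β : ℂ) * p) + ((1 + X) * derivative q + C (β : ℂ) * q) := by
      rw [derivative_add]; ring
    rw [e, LinearMap.map_add, hp, hq, eval_add]
  | monomial k r =>
    rcases k with _ | k
    · have p2 : (β : ℂ) ≠ 0 := by exact_mod_cast hβ.ne'
      have e : (1 + X) * derivative (monomial 0 r) + C (β : ℂ) * monomial 0 r =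
          monomial 0 (β * r) := by simp
      rw [e, Lx_monomial]
      simp [muk, Rpartial, poch]
      field_simp
    · have e : (1 + X) * derivative (monomial (k + 1) r) + C (β : ℂ) * monomial (k + 1) r =
          monomial k (r * (k + 1)) + monomial (k + 1) (r * (k + 1) + β * r) := by
        rw [derivative_monomial, add_mul, one_mul, X_mul_monomial, C_mul_monomial, map_add]
        simp
        ring
      rw [e, LinearMap.map_add, Lx_monomial, Lx_monomial, eval_monomial, ← muk_rec β hβ]
      ring

end rootsLemmas

section mainLemmas
open Polynomial

theorem jpC_ode (a b : ℝ) (N : ℕ) :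
    X * (X + 1) * derivative (derivative ((jp a b N).map Complex.ofRealHom)) +
      (C ((a : ℂ) + 1) + C ((a : ℂ) + b + 2) * X) * derivative ((jp a b N).map Complex.ofRealHom) =
      C ((N : ℂ) * (N + a + b + 1)) * (jp a b N).map Complex.ofRealHom := by
  have := congrArg (Polynomial.map Complex.ofRealHom) (jp_ode a b N)
  simp only [Polynomial.map_add, Polynomial.map_mul, Polynomial.map_X, Polynomial.map_one,
    Polynomial.map_C, ← derivative_map] at this
  simpa using this

theorem jpC_roots (a b : ℝ) (N : ℕ) (c : ℂ) (u : Fin N → ℂ)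
    (h : ∀ x : ℂ, jacobiC a b (N : ℤ) x = c * ∏ j, (x - u j)) :
    (jp a b N).map Complex.ofRealHom = C (c * 2 ^ N) * ∏ j, (X - C ((u j - 1) / 2)) := by
  apply Polynomial.funext
  intro t
  have h1 := h (1 + 2 * t)
  rw [jacobiC_eq, show (1 + 2 * t - 1) / 2 = t by ring] at h1
  rw [h1, eval_mul, eval_C, eval_prod, mul_assoc]
  congr 1
  have : (2 : ℂ) ^ N = ∏ _j : Fin N, (2 : ℂ) := by simp
  rw [this, ← Finset.prod_mul_distrib]
  refine Finset.prod_congr rfl fun j _ => ?_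
  rw [eval_sub, eval_X, eval_C]
  ring

theorem jpC_comp (a b : ℝ) (N : ℕ) (c : ℂ) (u : Fin N → ℂ)
    (h : ∀ x : ℂ, jacobiC a b (N : ℤ) x = c * ∏ j, (x - u j)) :
    ((jp a b N).map Complex.ofRealHom).comp (C (1 / 2) * (X - 1)) = C c * ∏ j, (X - C (u j)) := by
  apply Polynomial.funext
  intro x
  rw [eval_comp, eval_mul, eval_mul, eval_sub, eval_C, eval_X, eval_one, eval_C, eval_prod,
    show (1 / 2 : ℂ) * (x - 1) = (x - 1) / 2 by ring, ← jacobiC_eq, h]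
  simp

theorem jpC_lead (a b : ℝ) (N : ℕ) (c : ℂ) (u : Fin N → ℂ)
    (h : ∀ x : ℂ, jacobiC a b (N : ℤ) x = c * ∏ j, (x - u j)) :
    poch ((a : ℂ) + b + N + 1) N = (N.factorial : ℂ) * 2 ^ N * c := by
  have h1 := congrArg (fun p => coeff p N) (jpC_roots a b N c u h)
  simp only [coeff_map, jp_coeff, coeff_C_mul] at h1
  have hd : (∏ j, (X - C ((u j - 1) / 2))).natDegree = N := by
    rw [natDegree_finsetProd_X_sub_C_eq_card]; simp
  have hm : (∏ j, (X - C ((u j - 1) / 2))).Monic :=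
    monic_prod_of_monic _ _ fun j _ => monic_X_sub_C _
  have hc : (∏ j, (X - C ((u j - 1) / 2))).coeff N = 1 := by
    have := hm.coeff_natDegree
    rwa [hd] at this
  rw [hc, jcf] at h1
  simp at h1
  have hf : ((Nat.factorial N : ℕ) : ℂ) ≠ 0 := by exact_mod_cast (Nat.factorial_pos N).ne'
  rw [poch]
  field_simp at h1
  rw [h1]
  ring

theorem main_ode (A B : ℂ[X]) (δ β m N : ℂ)
    (hA : X * (X + 1) * derivative (derivative A) + (C (-δ + 1) + C (-δ + (β - 1) + 2) * X) *
      derivative A = C (m * (m + -δ + (β - 1) + 1)) * A)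
    (hB : X * (X + 1) * derivative (derivative B) + (C (δ + 1) + C (δ + (β - 1) + 2) * X) *
      derivative B = C (N * (N + δ + (β - 1) + 1)) * B) :
    (1 + X) * derivative (X * (A * derivative B - derivative A * B) + C δ * (A * B)) +
      C β * (X * (A * derivative B - derivative A * B) + C δ * (A * B)) =
    C ((N - m + δ) * (N + m + β)) * (A * B) := by
  have e2 : (C (2 : ℂ) : ℂ[X]) = 2 := rfl
  simp only [C_add, C_mul, C_sub, C_neg, C_1, e2, derivative_add, derivative_mul, derivative_sub,
    derivative_C, derivative_X] at hA hB ⊢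
  linear_combination A * hB - B * hA

theorem comp_ode (E F : ℂ[X]) (β : ℂ) (h : (1 + X) * derivative E + C β * E = F) :
    (1 + X) * derivative (E.comp (C (1 / 2) * (X - 1))) + C β * E.comp (C (1 / 2) * (X - 1)) =
      F.comp (C (1 / 2) * (X - 1)) := by
  rw [← h, derivative_comp]
  have e : (C (1 / 2 : ℂ) : ℂ[X]) * 2 = 1 := by
    rw [show (2 : ℂ[X]) = C 2 from rfl, ← C_mul]; norm_num
  simp only [add_comp, mul_comp, C_comp, X_comp, one_comp, derivative_mul, derivative_C,
    derivative_sub, derivative_X, derivative_one]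
  linear_combination ((derivative E).comp (C (1 / 2) * (X - 1))) * e

theorem XJac_eq (m n : ℕ) (α β : ℝ) (hα : 0 < α + 1 - m) (hmn : m ≤ n) (x : ℂ) (A B : ℂ[X])
    (hA : A = (jp (-α - 1) (β - 1) m).map Complex.ofRealHom)
    (hB : B = (jp (α + 1) (β - 1) (n - m)).map Complex.ofRealHom) :
    ((α : ℂ) + 1 + n - m) * XJacC m α β n x = (-1) ^ m *
      (X * (A * derivative B - derivative A * B) + C ((α : ℂ) + 1) * (A * B)).eval ((x - 1) / 2) := by
  have hne : ((α : ℂ) + 1 + n - m) ≠ 0 := by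
    have : α + 1 + n - m ≠ 0 := by
      have : (0 : ℝ) ≤ n := Nat.cast_nonneg n
      linarith
    exact_mod_cast this
  have hc : (n : ℤ) - m = ((n - m : ℕ) : ℤ) := by omega
  have a1 : jacobiC (-α - 1) (β - 1) (m : ℤ) x = A.eval ((x - 1) / 2) := by rw [hA, jacobiC_eq]
  have b1 : jacobiC (α + 1) (β - 1) ((n : ℤ) - m) x = B.eval ((x - 1) / 2) := by
    rw [hB, hc, jacobiC_eq]
  have a2 : ((α : ℂ) + 1 - m) * jacobiC (-α - 2) β (m : ℤ) x = ((α : ℂ) + 1) * A.eval ((x - 1) / 2)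
      - (x - 1) / 2 * (derivative A).eval ((x - 1) / 2) := by
    have := congrArg (Polynomial.map Complex.ofRealHom) (jp_contig (-α - 1) (β - 1) m)
    simp only [Polynomial.map_add, Polynomial.map_mul, Polynomial.map_X,
      Polynomial.map_C, ← derivative_map, ← hA] at this
    rw [show -α - 1 - 1 = -α - 2 by ring, show β - 1 + 1 = β by ring] at this
    have := congrArg (eval ((x - 1) / 2)) this
    simp only [eval_add, eval_mul, eval_X, eval_C] at this
    rw [jacobiC_eq]
    simp only [Complex.ofRealHom_eq_coe] at this
    push_cast at this
    linear_combination this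
  have b2 : (1 + (α : ℂ) + β + n - m) * jacobiC (α + 2) β ((n : ℤ) - m - 1) x =
      (derivative B).eval ((x - 1) / 2) := by
    rcases Nat.eq_zero_or_pos (n - m) with h0 | h0
    · have : (n : ℤ) - m - 1 = -1 := by omega
      rw [this, hB, h0]
      simp [jacobiC, jp]
    · obtain ⟨k, hk⟩ : ∃ k, n - m = k + 1 := ⟨n - m - 1, by omega⟩
      have : (n : ℤ) - m - 1 = (k : ℤ) := by omega
      rw [this, hB, hk, derivative_map, jp_deriv, jacobiC_eq, Polynomial.map_mul, eval_mul,
        Polynomial.map_C, eval_C, show α + 1 + 1 = α + 2 by ring, show β - 1 + 1 = β by ring]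
      have hn : (n : ℂ) = k + 1 + m := by exact_mod_cast (by omega : n = k + 1 + m)
      rw [hn]
      simp only [Complex.ofRealHom_eq_coe]
      push_cast
      ring
  rw [XJacC, ← mul_assoc, mul_div_cancel₀ _ hne, a1, b1]
  simp only [eval_add, eval_mul, eval_X, eval_C, eval_sub]
  linear_combination ((-1 : ℂ) ^ m * (x - 1) / 2 * A.eval ((x - 1) / 2)) * b2 +
    ((-1 : ℂ) ^ m * B.eval ((x - 1) / 2)) * a2

theorem jpC_ne_zero (a b : ℝ) (N : ℕ) (t : ℝ) (h : (jp a b N).eval t ≠ 0) :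
    ((jp a b N).map Complex.ofRealHom).eval (t : ℂ) ≠ 0 := by
  rw [show (t : ℂ) = Complex.ofRealHom t from rfl, eval_map_apply]
  simpa using h

end mainLemmas

theorem stmt10 (m : ℕ) (α β : ℝ) (hβ : 0 < β) (hα : 0 < α + 1 - m)
    (hexc : ∀ k : ℕ, k < m → α + 1 - m - β ≠ k) (n : ℕ) (hmn : m ≤ n)
    (w : Fin m → ℂ) (v : Fin (n - m) → ℂ) (c d : ℂ)
    (hw : ∀ X : ℂ, jacobiC (-α - 1) (β - 1) (m : ℤ) X = c * ∏ j, (X - w j))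
    (hv : ∀ X : ℂ, jacobiC (α + 1) (β - 1) ((n : ℤ) - m) X = d * ∏ j, (X - v j))
    (W : Fin n → ℂ)
    (hW : W = fun j => Fin.append w v (Fin.cast (show n = m + (n - m) by omega) j))
    (M : ℂ → Matrix (Fin (n + 1)) (Fin (n + 1)) ℂ)
    (hM : ∀ x : ℂ, M x = Matrix.of fun (i k : Fin (n + 1)) =>
      if h : (i : ℕ) < n then (W ⟨i, h⟩) ^ (k : ℕ)
      else (-1 : ℂ) ^ (k : ℕ) * (Nat.factorial (k : ℕ) : ℂ) * Rpartial (k : ℕ) x β /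
        poch (β : ℂ) ((k : ℕ) + 1)) :
    (∀ x : ℂ,
      (Nat.factorial n : ℂ) * ((α : ℂ) + 1 + n - m) *
          (∏ i : Fin n, ∏ j ∈ Finset.Ioi i, (W j - W i)) * XJacC m α β n x =
        (-1 : ℂ) ^ m * ((2 : ℂ) ^ n)⁻¹ * (n.choose m : ℂ) *
          ((n : ℂ) + (α + 1 : ℝ) - 2 * m) * ((n : ℂ) + (β : ℂ)) *
          poch ((β : ℂ) - (α + 1 : ℝ) + m) m *
          poch (((α + 1 : ℝ) : ℂ) + β + n - m) (n - m) * (M x).det) ∧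
      Function.Injective W := by
  have hc : (n : ℤ) - m = ((n - m : ℕ) : ℤ) := by omega
  rw [hc] at hv
  have hnm : (n : ℂ) = ((n - m : ℕ) : ℂ) + m := by exact_mod_cast (by omega : n = n - m + m)
  have hprod : ∀ f : ℂ → Polynomial ℂ, ∏ j, f (W j) = (∏ j, f (w j)) * ∏ j, f (v j) := by
    intro f
    rw [hW]
    have := Fin.prod_congr' (fun j => f (Fin.append w v j)) (show n = m + (n - m) by omega)
    rw [this, Fin.prod_univ_add]
    simp
  have hm0 : (0 : ℝ) ≤ m := Nat.cast_nonneg m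
  constructor
  · intro x
    have hdet : (M x).det = (∏ i : Fin n, ∏ j ∈ Finset.Ioi i, (W j - W i)) *
        Lx β x (∏ j, (Polynomial.X - Polynomial.C (W j))) := by
      rw [← det_functional, hM]
      simp only [Lx_X_pow, muk]
    have hA := jpC_ode (-α - 1) (β - 1) m
    have hB := jpC_ode (α + 1) (β - 1) (n - m)
    have cA := jpC_comp _ _ _ _ _ hw
    have cB := jpC_comp _ _ _ _ _ hv
    have lA := jpC_lead _ _ _ _ _ hw
    have lB := jpC_lead _ _ _ _ _ hv
    have hX := XJac_eq m n α β hα hmn x _ _ rfl rfl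
    generalize (jp (-α - 1) (β - 1) m).map Complex.ofRealHom = A at *
    generalize (jp (α + 1) (β - 1) (n - m)).map Complex.ofRealHom = B at *
    have r1 : ((-α - 1 : ℝ) : ℂ) = -((α : ℂ) + 1) := by push_cast; ring
    have r2 : ((β - 1 : ℝ) : ℂ) = (β : ℂ) - 1 := by push_cast; ring
    have r3 : ((α + 1 : ℝ) : ℂ) = (α : ℂ) + 1 := by push_cast; ring
    rw [r1, r2] at hA lA
    rw [r3, r2] at hB lB
    have hE := comp_ode _ _ _ (main_ode A B ((α : ℂ) + 1) β m ((n - m : ℕ) : ℂ) hA hB)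
    have hL := Lx_ode β hβ x ((Polynomial.X * (A * Polynomial.derivative B -
      Polynomial.derivative A * B) + Polynomial.C ((α : ℂ) + 1) * (A * B)).comp
        (Polynomial.C (1 / 2) * (Polynomial.X - 1)))
    rw [hE, Polynomial.eval_comp, Polynomial.mul_comp, Polynomial.mul_comp, cA, cB,
      Polynomial.C_comp] at hL
    have e1 : Polynomial.eval x (Polynomial.C (1 / 2 : ℂ) * (Polynomial.X - 1)) = (x - 1) / 2 := by
      rw [Polynomial.eval_mul, Polynomial.eval_C, Polynomial.eval_sub, Polynomial.eval_X,
        Polynomial.eval_one]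
      ring
    rw [e1] at hL
    have e2 : ∀ κ : ℂ, Polynomial.C κ * (Polynomial.C c * (∏ j, (Polynomial.X - Polynomial.C (w j))) *
        (Polynomial.C d * ∏ j, (Polynomial.X - Polynomial.C (v j)))) =
        (κ * c * d) • ∏ j, (Polynomial.X - Polynomial.C (W j)) := by
      intro κ
      rw [hprod (fun y => Polynomial.X - Polynomial.C y), Polynomial.smul_eq_C_mul,
        Polynomial.C_mul, Polynomial.C_mul]
      ring
    rw [e2, LinearMap.map_smul, smul_eq_mul] at hL
    have e3 : (β : ℂ) - ((α + 1 : ℝ) : ℂ) + m = -((α : ℂ) + 1) + (β - 1) + m + 1 := by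
      push_cast; ring
    have e4 : ((α + 1 : ℝ) : ℂ) + β + n - m = (α : ℂ) + 1 + (β - 1) + ((n - m : ℕ) : ℂ) + 1 := by
      rw [hnm]; push_cast; ring
    have hch : (n.choose m : ℂ) * m.factorial * (n - m).factorial = n.factorial := by
      exact_mod_cast Nat.choose_mul_factorial_mul_factorial hmn
    have h2 : (2 : ℂ) ^ n = 2 ^ (n - m) * 2 ^ m := by
      rw [← pow_add]; congr 1; omega
    have h2' : ((2 : ℂ) ^ n)⁻¹ * (2 ^ (n - m) * 2 ^ m) = 1 := by
      rw [← h2]; exact inv_mul_cancel₀ (pow_ne_zero _ two_ne_zero)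
    rw [e3, e4, lA, lB, hdet]
    have e5 : (n : ℂ) + ((α + 1 : ℝ) : ℂ) - 2 * m = ((n - m : ℕ) : ℂ) - m + ((α : ℂ) + 1) := by
      rw [hnm]; push_cast; ring
    have e6 : (n : ℂ) + β = ((n - m : ℕ) : ℂ) + m + β := by rw [hnm]
    rw [e5, e6]
    generalize (∏ i : Fin n, ∏ j ∈ Finset.Ioi i, (W j - W i)) = V
    generalize Lx β x (∏ j, (Polynomial.X - Polynomial.C (W j))) = Y at hL ⊢
    rw [← hL] at hX
    generalize ((n - m : ℕ) : ℂ) - m + ((α : ℂ) + 1) = K1 at *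
    generalize ((n - m : ℕ) : ℂ) + m + (β : ℂ) = K2 at *
    generalize XJacC m α β n x = Z at *
    clear hE hA hB cA cB lA lB
    calc _ = (n.factorial : ℂ) * V * (((α : ℂ) + 1 + n - m) * Z) := by ring
      _ = (n.factorial : ℂ) * V * ((-1) ^ m * (K1 * K2 * c * d * Y)) := by rw [hX]
      _ = ((n.choose m : ℂ) * m.factorial * (n - m).factorial) *
          (((2 : ℂ) ^ n)⁻¹ * (2 ^ (n - m) * 2 ^ m)) * V * ((-1) ^ m * (K1 * K2 * c * d * Y)) := by
          rw [hch, h2', mul_one]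
      _ = _ := by ring
  · have rA := jpC_roots _ _ _ _ _ hw
    have rB := jpC_roots _ _ _ _ _ hv
    have oA := jpC_ode (-α - 1) (β - 1) m
    have oB := jpC_ode (α + 1) (β - 1) (n - m)
    have sA := jp_sign m (-α - 1) (β - 1) (by linarith) (by linarith) (by
      intro k hk h
      apply hexc k hk
      linarith)
    have B1 := jp_eval_neg_one (n - m) (α + 1) (β - 1) (by linarith) (by
      intro k hk h
      have : (0 : ℝ) ≤ ((n - m : ℕ) : ℝ) := Nat.cast_nonneg _
      have : (0 : ℝ) ≤ k := Nat.cast_nonneg k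
      linarith)
    have B0 : (jp (α + 1) (β - 1) (n - m)).eval 0 ≠ 0 := by
      rw [jp_eval_zero]
      have : 0 < ∏ i ∈ Finset.range (n - m), (α + 1 + (i : ℝ) + 1) := by
        apply Finset.prod_pos
        intro i _
        have : (0 : ℝ) ≤ i := Nat.cast_nonneg i
        linarith
      positivity
    have A' : ∀ t ∈ Set.Icc (-1 : ℝ) 0,
        ((jp (-α - 1) (β - 1) m).map Complex.ofRealHom).eval (t : ℂ) ≠ 0 := fun t ht =>
      jpC_ne_zero _ _ _ _ (right_ne_zero_of_mul (sA t ht).ne')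
    have A0 := A' 0 (by constructor <;> norm_num)
    have A1 := A' (-1) (by constructor <;> norm_num)
    have B0' := jpC_ne_zero _ _ _ _ B0
    have B1' := jpC_ne_zero _ _ _ _ (right_ne_zero_of_mul B1.ne')
    generalize (jp (-α - 1) (β - 1) m).map Complex.ofRealHom = A at *
    generalize (jp (α + 1) (β - 1) (n - m)).map Complex.ofRealHom = B at *
    have zA : ∀ i, A.eval ((w i - 1) / 2) = 0 := by
      intro i
      rw [rA, Polynomial.eval_mul, Polynomial.eval_prod,
        Finset.prod_eq_zero (Finset.mem_univ i) (by simp), mul_zero]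
    have zB : ∀ i, B.eval ((v i - 1) / 2) = 0 := by
      intro i
      rw [rB, Polynomial.eval_mul, Polynomial.eval_prod,
        Finset.prod_eq_zero (Finset.mem_univ i) (by simp), mul_zero]
    have nz : ∀ (P : Polynomial ℂ) (z : ℂ), P.eval ((0 : ℝ) : ℂ) ≠ 0 →
        P.eval ((-1 : ℝ) : ℂ) ≠ 0 → P.eval z = 0 → P ≠ 0 ∧ z ≠ 0 ∧ z + 1 ≠ 0 := by
      intro P z p0 p1 hz
      refine ⟨?_, ?_, ?_⟩
      · rintro rfl
        simp at p0
      · rintro rfl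
        simp [hz] at p0
      · intro h
        have : z = ((-1 : ℝ) : ℂ) := by push_cast; linear_combination h
        rw [this] at hz
        exact p1 hz
    have dA : ∀ i, (Polynomial.derivative A).eval ((w i - 1) / 2) ≠ 0 := by
      intro i
      obtain ⟨h1, h2, h3⟩ := nz A _ A0 A1 (zA i)
      exact ode_simple A _ _ _ _ oA h1 h2 h3 (zA i)
    have dB : ∀ i, (Polynomial.derivative B).eval ((v i - 1) / 2) ≠ 0 := by
      intro i
      obtain ⟨h1, h2, h3⟩ := nz B _ B0' B1' (zB i)
      exact ode_simple B _ _ _ _ oB h1 h2 h3 (zB i)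
    have iA := prod_inj _ (fun j => (w j - 1) / 2) (by rw [← rA]; exact dA)
    have iB := prod_inj _ (fun j => (v j - 1) / 2) (by rw [← rB]; exact dB)
    have reB : ∀ j, ∃ t ∈ Set.Icc (-1 : ℝ) 0, (v j - 1) / 2 = (t : ℂ) := by
      intro j
      apply real_of_bound
      intro y
      refine electro _ (fun j => (v j - 1) / 2) (α + 1 + 1) β
        (((n - m : ℕ) : ℂ) * (((n - m : ℕ) : ℂ) + ((α + 1 : ℝ) : ℂ) + ((β - 1 : ℝ) : ℂ) + 1))
        (by linarith) hβ B rB ?_ dB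
        (fun i => (nz B _ B0' B1' (zB i)).2.1) (fun i => (nz B _ B0' B1' (zB i)).2.2) y j
      rw [← oB]
      have r1 : ((α + 1 + 1 : ℝ) : ℂ) = ((α + 1 : ℝ) : ℂ) + 1 := by push_cast; ring
      have r2 : ((α + 1 : ℝ) : ℂ) + 1 + β = ((α + 1 : ℝ) : ℂ) + ((β - 1 : ℝ) : ℂ) + 2 := by
        push_cast; ring
      rw [r1, r2]
    rw [hW]
    have : Function.Injective (Fin.append w v) := by
      rw [Fin.append_injective_iff]
      refine ⟨?_, ?_, ?_⟩
      · intro i j h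
        exact iA (by simp only [h])
      · intro i j h
        exact iB (by simp only [h])
      · intro i j h
        obtain ⟨t, ht, hvt⟩ := reB j
        apply A' t ht
        rw [← hvt, ← h]
        exact zA i
    exact this.comp (Fin.cast_injective _)
end

section
/- Let n ≥ 3. Then for every x ∈ ℝ, H_{2,n}^{({1,1})}(x) = 8n(n−1)(n−2)·∫_0^x H_{{1,1}}(t)·H_{n−3}(t) dt + 16(n−1)(n−2)·H_{n−2}(0), and also H_{2,n}^{({1,1})}(x) = ∫_0^x H_{{1,1}}(t)·H_n'''(t) dt + 8(n−2)·H_{n−1}'(0). -/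
open Polynomial MeasureTheory

/-- Physicists' Hermite polynomials: `H_0 = 1`, `H_n = 2x H_{n-1} - H_{n-1}'`. -/
noncomputable def hermitePhys : ℕ → Polynomial ℝ
  | 0 => 1
  | n + 1 => 2 * Polynomial.X * hermitePhys n - Polynomial.derivative (hermitePhys n)

/-- Exceptional `X_2`-Hermite polynomial for the partition `{1,1}`. -/
noncomputable def XHerm (n : ℕ) (x : ℝ) : ℝ :=
  Matrix.det
    !![2 * x, 4 * x ^ 2 - 2, (hermitePhys n).eval x;
       2, 8 * x, ((hermitePhys n).derivative).eval x;
       0, 8, ((hermitePhys n).derivative.derivative).eval x]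

theorem hermitePhys_deriv (n : ℕ) :
    derivative (hermitePhys (n + 1)) = C (2 * ((n : ℝ) + 1)) * hermitePhys n := by
  induction n with
  | zero =>
    simp [hermitePhys]
    rfl
  | succ k ih =>
    have h1 : hermitePhys (k + 1 + 1)
      = 2 * X * hermitePhys (k + 1) - derivative (hermitePhys (k + 1)) := rfl
    have h2 : hermitePhys (k + 1)
      = 2 * X * hermitePhys k - derivative (hermitePhys k) := rfl
    have h3 : derivative (2 * X * hermitePhys (k + 1))
      = 2 * hermitePhys (k + 1) + 2 * X * derivative (hermitePhys (k + 1)) := by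
      simp [derivative_mul]
    rw [h1, derivative_sub, h3, ih, derivative_C_mul]
    have h4 : C (2 * (((k + 1 : ℕ) : ℝ) + 1)) = (C (2 * ((k : ℝ) + 1)) + 2 : ℝ[X]) := by
      have : (2 : ℝ[X]) = C 2 := rfl
      rw [this, ← C_add]; congr 1; push_cast; ring
    rw [h4]
    linear_combination (-C (2 * ((k : ℝ) + 1))) * h2

theorem XHerm_eq (n : ℕ) (x : ℝ) : XHerm n x =
    (8 * x ^ 2 + 4) * ((hermitePhys n).derivative.derivative).eval x
      - 16 * x * ((hermitePhys n).derivative).eval x + 16 * (hermitePhys n).eval x := by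
  simp [XHerm, Matrix.det_fin_three]
  ring

theorem XHerm_integral (n : ℕ) (x : ℝ) :
    (∫ t in (0 : ℝ)..x,
      4 * (2 * t ^ 2 + 1) * ((hermitePhys n).derivative.derivative.derivative).eval t)
      = XHerm n x - XHerm n 0 := by
  apply intervalIntegral.integral_eq_sub_of_hasDerivAt
  · intro t _
    have e : XHerm n = fun x => ((8 * X ^ 2 + 4) * (hermitePhys n).derivative.derivative
      - 16 * X * (hermitePhys n).derivative + 16 * hermitePhys n : ℝ[X]).eval x := by
      funext y; rw [XHerm_eq]; simp
    rw [e]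
    refine (Polynomial.hasDerivAt _ t).congr_deriv ?_
    simp [derivative_mul]
    ring
  · apply Continuous.intervalIntegrable
    fun_prop

theorem stmt11 (n : ℕ) (hn : 3 ≤ n) :
    ∀ x : ℝ,
      XHerm n x =
          8 * (n : ℝ) * ((n : ℝ) - 1) * ((n : ℝ) - 2) *
              (∫ t in (0 : ℝ)..x, 4 * (2 * t ^ 2 + 1) * (hermitePhys (n - 3)).eval t)
            + 16 * ((n : ℝ) - 1) * ((n : ℝ) - 2) * (hermitePhys (n - 2)).eval 0 ∧
      XHerm n x =
          (∫ t in (0 : ℝ)..x,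
              4 * (2 * t ^ 2 + 1) * ((hermitePhys n).derivative.derivative.derivative).eval t)
            + 8 * ((n : ℝ) - 2) * ((hermitePhys (n - 1)).derivative).eval 0 := by
  intro x
  obtain ⟨m, rfl⟩ : ∃ m, n = m + 3 := ⟨n - 3, by omega⟩
  have a1 : m + 3 - 3 = m := by omega
  have a2 : m + 3 - 2 = m + 1 := by omega
  have a3 : m + 3 - 1 = m + 2 := by omega
  rw [a1, a2, a3]
  have d3 := hermitePhys_deriv (m + 2)
  have d2 := hermitePhys_deriv (m + 1)
  have d1 := hermitePhys_deriv m
  have hI := XHerm_integral (m + 3) x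
  have h0 := XHerm_eq (m + 3) 0
  have hr : (hermitePhys (m + 3)).eval 0 = - ((hermitePhys (m + 2)).derivative).eval 0 := by
    have : hermitePhys (m + 3)
      = 2 * X * hermitePhys (m + 2) - derivative (hermitePhys (m + 2)) := rfl
    rw [this]; simp
  have e2 : ((hermitePhys (m + 2)).derivative).eval 0
      = 2 * ((m : ℝ) + 2) * (hermitePhys (m + 1)).eval 0 := by
    rw [d2, eval_C_mul]; push_cast; ring
  have e3 : ((hermitePhys (m + 3)).derivative.derivative).eval 0
      = 2 * ((m : ℝ) + 3) * (2 * ((m : ℝ) + 2) * (hermitePhys (m + 1)).eval 0) := by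
    rw [d3, derivative_C_mul, d2, eval_C_mul, eval_C_mul]; push_cast; ring
  have hJ : (∫ t in (0 : ℝ)..x,
      4 * (2 * t ^ 2 + 1) * ((hermitePhys (m + 3)).derivative.derivative.derivative).eval t)
      = 8 * ((m : ℝ) + 3) * ((m : ℝ) + 2) * ((m : ℝ) + 1) *
        ∫ t in (0 : ℝ)..x, 4 * (2 * t ^ 2 + 1) * (hermitePhys m).eval t := by
    rw [← intervalIntegral.integral_const_mul]
    congr 1
    funext t
    rw [d3, derivative_C_mul, d2, derivative_C_mul, derivative_C_mul, d1,
      eval_C_mul, eval_C_mul, eval_C_mul]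
    push_cast; ring
  rw [hr, e2, e3] at h0
  constructor
  · rw [hJ] at hI
    push_cast
    linear_combination h0 - hI
  · rw [e2]
    push_cast
    linear_combination h0 - hI
end

section
/- Let n ≥ 3. Let y_1,…,y_{n−3} ∈ ℝ list the roots of the physicists' Hermite polynomial H_{n−3} with multiplicity, i.e., H_{n−3}(X) = 2^{n−3}·∏_{j=1}^{n−3}(X−y_j). Set U_1 = i/√2, U_2 = −i/√2, and U_{j} = y_{j−2} for 3 ≤ j ≤ n−1. For x ∈ ℂ let M(x) be the n×n matrix whose j-th row, for 1 ≤ j ≤ n−1, is (1, U_j, U_j², …, U_j^{n−1}), and whose last row is (1, x/2, x²/3, …, x^{n−1}/n). Then for every x ∈ ℂ, (∏_{1≤i<j≤n−1}(U_j−U_i))·H_{2,n}^{({1,1})}(x) = 2^{n+3}·n(n−1)(n−2)·x·det M(x) + 16(n−1)(n−2)·H_{n−2}(0)·(∏_{1≤i<j≤n−1}(U_j−U_i)); moreover the points U_1,…,U_{n−1} are pairwise distinct, so the Vandermonde factor is nonzero. -/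
open Polynomial Finset

/-- Physicists' Hermite polynomials over `ℂ`. -/
noncomputable def hermitePhysC : ℕ → Polynomial ℂ
  | 0 => 1
  | n + 1 => 2 * Polynomial.X * hermitePhysC n - Polynomial.derivative (hermitePhysC n)

/-- Exceptional `X_2`-Hermite polynomial for the partition `{1,1}` (complex variable). -/
noncomputable def XHermC (n : ℕ) (x : ℂ) : ℂ :=
  Matrix.det
    !![2 * x, 4 * x ^ 2 - 2, (hermitePhysC n).eval x;
       2, 8 * x, ((hermitePhysC n).derivative).eval x;
       0, 8, ((hermitePhysC n).derivative.derivative).eval x]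

lemma aux_map (n : ℕ) : hermitePhysC n = (hermitePhys n).map (algebraMap ℝ ℂ) := by
  induction n with
  | zero => simp [hermitePhys, hermitePhysC]
  | succ n ih => simp [hermitePhys, hermitePhysC, ih, Polynomial.derivative_map]

lemma aux_deriv (n : ℕ) :
    derivative (hermitePhys (n + 1)) = 2 * ((n : ℝ[X]) + 1) * hermitePhys n := by
  induction n with
  | zero => simp [hermitePhys]
  | succ n ih =>
    have h2 : hermitePhys (n + 1) = 2 * X * hermitePhys n - derivative (hermitePhys n) := rfl
    have h3 : hermitePhys (n + 1 + 1)
      = 2 * X * hermitePhys (n + 1) - derivative (hermitePhys (n + 1)) := rfl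
    have hd : derivative (2 * ((n : ℝ[X]) + 1) * hermitePhys n)
        = 2 * ((n : ℝ[X]) + 1) * derivative (hermitePhys n) := by
      have : (2 * ((n : ℝ[X]) + 1)) = C (2 * ((n : ℝ) + 1)) := by
        simp only [map_mul, map_add, map_natCast, map_one, map_ofNat]
      rw [this, derivative_C_mul]
    rw [h3, derivative_sub, ih, hd, derivative_mul, derivative_mul, ih]
    simp only [derivative_ofNat, derivative_X]
    push_cast
    linear_combination (-2 * ((n : ℝ[X]) + 1)) * h2

lemma aux_derivC (n : ℕ) :
    derivative (hermitePhysC (n + 1)) = C (2 * ((n : ℂ) + 1)) * hermitePhysC n := by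
  rw [aux_map, aux_map, derivative_map, aux_deriv]
  simp only [map_mul, map_add, map_natCast, map_one, map_ofNat, Polynomial.map_mul,
    Polynomial.map_add, Polynomial.map_natCast, Polynomial.map_one, Polynomial.map_ofNat]

lemma aux_rec (n : ℕ) (a : ℝ) : (hermitePhys (n + 2)).eval a =
    2 * a * (hermitePhys (n + 1)).eval a - 2 * (n + 1) * (hermitePhys n).eval a := by
  have h3 : hermitePhys (n + 2)
      = 2 * X * hermitePhys (n + 1) - derivative (hermitePhys (n + 1)) := rfl
  rw [h3, aux_deriv]
  simp

lemma aux_ne (n : ℕ) (a : ℝ) :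
    ¬ ((hermitePhys n).eval a = 0 ∧ (hermitePhys (n + 1)).eval a = 0) := by
  induction n with
  | zero => simp [hermitePhys]
  | succ n ih =>
    rintro ⟨h1, h2⟩
    apply ih
    refine ⟨?_, h1⟩
    rw [aux_rec, h1] at h2
    have : (n : ℝ) + 1 ≠ 0 := by positivity
    simpa [this] using h2

lemma aux_poly (m : ℕ) (y : Fin m → ℝ)
    (hy : ∀ X : ℝ, (hermitePhys m).eval X = 2 ^ m * ∏ j, (X - y j)) :
    hermitePhys m = C (2 ^ m) * ∏ j, (X - C (y j)) := by
  apply Polynomial.funext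
  intro r
  rw [hy, eval_mul, eval_prod]
  simp

lemma aux_inj (m : ℕ) (y : Fin m → ℝ)
    (hy : ∀ X : ℝ, (hermitePhys m).eval X = 2 ^ m * ∏ j, (X - y j)) :
    Function.Injective y := by
  intro i j hij
  by_contra hne
  have hp := aux_poly m y hy
  obtain ⟨q, hq⟩ : ∃ q, hermitePhys m = (X - C (y i)) * ((X - C (y i)) * q) := by
    refine ⟨C (2 ^ m) * ∏ k ∈ (univ.erase i).erase j, (X - C (y k)), ?_⟩
    rw [hp, ← Finset.mul_prod_erase univ _ (mem_univ i),
      ← Finset.mul_prod_erase (univ.erase i) _ (mem_erase.2 ⟨Ne.symm hne, mem_univ j⟩), ← hij]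
    ring
  apply aux_ne m (y i)
  have hs : hermitePhys (m + 1) = 2 * X * hermitePhys m - derivative (hermitePhys m) := rfl
  constructor
  · rw [hq]; simp
  · rw [hs, hq, derivative_mul]; simp

/-- cofactors -/
noncomputable def cofU {N : ℕ} (U : Fin N → ℂ) (k : Fin (N + 1)) : ℂ :=
  (-1) ^ (N + (k : ℕ)) * Matrix.det (Matrix.of fun i j : Fin N => U i ^ (k.succAbove j : ℕ))

lemma aux_det {N : ℕ} (U : Fin N → ℂ) (r : Fin (N + 1) → ℂ) :
    Matrix.det (Matrix.of fun i k : Fin (N + 1) =>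
      if h : (i : ℕ) < N then (U ⟨i, h⟩) ^ (k : ℕ) else r k) = ∑ k, r k * cofU U k := by
  rw [Matrix.det_succ_row _ (Fin.last N)]
  refine Finset.sum_congr rfl fun k _ => ?_
  have : (Matrix.of fun i k : Fin (N + 1) =>
      if h : (i : ℕ) < N then (U ⟨i, h⟩) ^ (k : ℕ) else r k).submatrix
        (Fin.last N).succAbove k.succAbove
      = Matrix.of fun i j : Fin N => U i ^ (k.succAbove j : ℕ) := by
    ext i j
    simp
  rw [this, cofU]
  simp
  ring

lemma aux_vand {N : ℕ} (U : Fin N → ℂ) (t : ℂ) :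
    ∑ k : Fin (N + 1), t ^ (k : ℕ) * cofU U k =
      (∏ i : Fin N, ∏ j ∈ Finset.Ioi i, (U j - U i)) * ∏ j, (t - U j) := by
  rw [← aux_det U (fun k => t ^ (k : ℕ))]
  have : (Matrix.of fun i k : Fin (N + 1) =>
      if h : (i : ℕ) < N then (U ⟨i, h⟩) ^ (k : ℕ) else t ^ (k : ℕ))
      = Matrix.vandermonde (Fin.snoc U t : Fin (N + 1) → ℂ) := by
    ext i k
    refine Fin.lastCases ?_ (fun i => ?_) i <;> simp [Matrix.vandermonde_apply]
  rw [this, Matrix.det_vandermonde, Fin.prod_univ_castSucc]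
  have hl : Finset.Ioi (Fin.last N) = ∅ := by ext i; simp [Fin.le_last]
  have hi : ∀ i : Fin N, Finset.Ioi i.castSucc
      = Finset.cons (Fin.last N) ((Finset.Ioi i).map Fin.castSuccEmb) (by simp) := by
    intro i
    ext j
    refine Fin.lastCases ?_ (fun j => ?_) j <;> simp [Fin.castSucc_lt_last]
    intro _; exact Fin.le_last _
  simp only [hl, hi, Finset.prod_cons, Finset.prod_map, Finset.prod_empty, mul_one,
    Finset.prod_mul_distrib]
  simp [mul_comm]

lemma aux_main (m : ℕ) (y : Fin m → ℝ)
    (hy : ∀ X : ℝ, (hermitePhys m).eval X = 2 ^ m * ∏ j, (X - y j))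
    (U : Fin (m + 2) → ℂ) (h0 : U 0 = Complex.I / (Real.sqrt 2 : ℂ))
    (h1 : U 1 = -(Complex.I / (Real.sqrt 2 : ℂ)))
    (h2 : ∀ j : Fin m, U j.succ.succ = (y j : ℂ)) (x : ℂ) :
    (∏ i : Fin (m + 2), ∏ j ∈ Finset.Ioi i, (U j - U i)) * XHermC (m + 3) x =
      2 ^ (m + 3 + 3) * ((m : ℂ) + 3) * ((m : ℂ) + 2) * ((m : ℂ) + 1) * x *
        (∑ k : Fin (m + 3), x ^ (k : ℕ) / ((k : ℂ) + 1) * cofU U k)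
      + 16 * ((m : ℂ) + 2) * ((m : ℂ) + 1) * (hermitePhysC (m + 1)).eval 0 *
        (∏ i : Fin (m + 2), ∏ j ∈ Finset.Ioi i, (U j - U i)) := by
  set V := ∏ i : Fin (m + 2), ∏ j ∈ Finset.Ioi i, (U j - U i) with hV
  have hsq : (Complex.I / (Real.sqrt 2 : ℂ)) ^ 2 = -1 / 2 := by
    rw [div_pow, Complex.I_sq, ← Complex.ofReal_pow, Real.sq_sqrt (by norm_num)]; norm_num
  have hH : hermitePhysC m = C (2 ^ m) * ∏ j, (X - C ((y j : ℝ) : ℂ)) := by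
    rw [aux_map, aux_poly m y hy]
    simp [Polynomial.map_prod]
  have hP : ∏ j, (X - C (U j)) = (X ^ 2 + C (1 / 2)) * ∏ j, (X - C ((y j : ℝ) : ℂ)) := by
    rw [Fin.prod_univ_succ, Fin.prod_univ_succ, ← mul_assoc]
    simp only [h2]
    congr 1
    rw [show (Fin.succ 0 : Fin (m + 2)) = 1 from rfl, h0, h1]
    have : (C (Complex.I / (Real.sqrt 2 : ℂ))) ^ 2 = C (-1 / 2 : ℂ) := by rw [← C_pow, hsq]
    have e : (C (-1 / 2 : ℂ)) = - C (1 / 2) := by rw [← C_neg]; norm_num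
    rw [C_neg]
    linear_combination -this - e
  -- Laplace sum
  have hS : ∑ k : Fin (m + 3), C (cofU U k) * X ^ (k : ℕ) = C V * ∏ j, (X - C (U j)) := by
    apply Polynomial.funext
    intro t
    have := aux_vand U t
    rw [eval_finsetSum, eval_mul, eval_prod]
    simp only [eval_mul, eval_C, eval_pow, eval_X, eval_sub]
    rw [← this]
    exact Finset.sum_congr rfl fun k _ => mul_comm _ _
  set Q : ℂ[X] := ∑ k : Fin (m + 3), C (cofU U k / ((k : ℂ) + 1)) * X ^ ((k : ℕ) + 1) with hQ
  have hQd : derivative Q = C V * ∏ j, (X - C (U j)) := by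
    rw [← hS, hQ, derivative_sum]
    refine Finset.sum_congr rfl fun k _ => ?_
    have hk : ((k : ℕ) : ℂ) + 1 ≠ 0 := Nat.cast_add_one_ne_zero _
    rw [derivative_C_mul_X_pow]
    push_cast
    rw [div_mul_cancel₀ _ hk]
    try simp
  set H := hermitePhysC (m + 3) with hHdef
  set W : ℂ[X] := (C 8 * X ^ 2 + C 4) * derivative (derivative H) - C 16 * X * derivative H
    + C 16 * H with hW
  have hd1 : derivative H = C (2 * ((m : ℂ) + 3)) * hermitePhysC (m + 2) := by
    rw [hHdef, aux_derivC]; push_cast; ring_nf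
  have hd2 : derivative (derivative H)
      = C (2 * ((m : ℂ) + 3)) * (C (2 * ((m : ℂ) + 2)) * hermitePhysC (m + 1)) := by
    rw [hd1, derivative_C_mul, aux_derivC]; push_cast; ring_nf
  have hd3 : derivative (derivative (derivative H))
      = C (2 * ((m : ℂ) + 3)) * (C (2 * ((m : ℂ) + 2)) *
        (C (2 * ((m : ℂ) + 1)) * hermitePhysC m)) := by
    rw [hd2, derivative_C_mul, derivative_C_mul, aux_derivC]
  have hWd : derivative W = (C 8 * X ^ 2 + C 4) * derivative (derivative (derivative H)) := by
    rw [hW]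
    simp only [derivative_add, derivative_sub, derivative_mul, derivative_C, derivative_X_pow,
      derivative_X]
    have : (C 16 : ℂ[X]) = C 8 * 2 := by
      rw [show (16 : ℂ) = 8 * 2 by norm_num, C_mul]; rfl
    rw [this]
    push_cast
    simp only [map_ofNat]
    ring
  set K : ℂ := 2 ^ (m + 3 + 3) * ((m : ℂ) + 3) * ((m : ℂ) + 2) * ((m : ℂ) + 1) with hK
  have hD : derivative (C V * W - C K * Q) = 0 := by
    rw [derivative_sub, derivative_C_mul, derivative_C_mul, hWd, hQd, hd3, hH, hP, hK]
    apply Polynomial.funext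
    intro t
    simp only [eval_sub, eval_mul, eval_C, eval_add, eval_pow, eval_X, eval_zero]
    ring
  have hc := derivative_eq_zero.1 hD
  have hc' := eq_C_of_natDegree_eq_zero hc
  have hev : ∀ t, (C V * W - C K * Q).eval t = (C V * W - C K * Q).eval 0 := by
    intro t; rw [hc']; simp
  have hX : XHermC (m + 3) x = W.eval x := by
    rw [XHermC, Matrix.det_fin_three, hW]
    simp
    ring
  have hQ0 : Q.eval 0 = 0 := by
    rw [hQ, eval_finsetSum]; simp
  have hQx : Q.eval x
      = x * (∑ k : Fin (m + 3), x ^ (k : ℕ) / ((k : ℂ) + 1) * cofU U k) := by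
    rw [hQ, eval_finsetSum, Finset.mul_sum]
    refine Finset.sum_congr rfl fun k _ => ?_
    simp only [eval_mul, eval_C, eval_pow, eval_X]
    ring
  have hW0 : W.eval 0
      = 16 * ((m : ℂ) + 2) * ((m : ℂ) + 1) * (hermitePhysC (m + 1)).eval 0 := by
    have hr : H = 2 * X * hermitePhysC (m + 2) - derivative (hermitePhysC (m + 2)) := rfl
    have hH0 : H.eval 0 = - (2 * ((m : ℂ) + 2)) * (hermitePhysC (m + 1)).eval 0 := by
      rw [hr, aux_derivC]; simp; left; ring
    rw [hW]
    simp only [eval_sub, eval_mul, eval_C, eval_add, eval_pow, eval_X, hd2, hH0]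
    ring
  have hf := hev x
  simp only [eval_sub, eval_mul, eval_C, hQ0, hQx, hW0, ← hX] at hf
  linear_combination hf

theorem stmt14 (n : ℕ) (hn : 3 ≤ n)
    (y : Fin (n - 3) → ℝ)
    (hy : ∀ X : ℝ, (hermitePhys (n - 3)).eval X = 2 ^ (n - 3) * ∏ j, (X - y j))
    (U : Fin (n - 1) → ℂ)
    (hU : ∀ j : Fin (n - 1), U j =
      if h : 2 ≤ (j : ℕ) then ((y ⟨(j : ℕ) - 2, by have := j.isLt; omega⟩ : ℝ) : ℂ)
      else if (j : ℕ) = 0 then Complex.I / (Real.sqrt 2 : ℂ)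
      else -(Complex.I / (Real.sqrt 2 : ℂ)))
    (M : ℂ → Matrix (Fin n) (Fin n) ℂ)
    (hM : ∀ x : ℂ, M x = Matrix.of fun (i k : Fin n) =>
      if h : (i : ℕ) < n - 1 then (U ⟨i, h⟩) ^ (k : ℕ)
      else x ^ (k : ℕ) / (((k : ℕ) : ℂ) + 1)) :
    (∀ x : ℂ,
      (∏ i : Fin (n - 1), ∏ j ∈ Finset.Ioi i, (U j - U i)) * XHermC n x =
        2 ^ (n + 3) * (n : ℂ) * ((n : ℂ) - 1) * ((n : ℂ) - 2) * x * (M x).det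
          + 16 * ((n : ℂ) - 1) * ((n : ℂ) - 2) * (hermitePhysC (n - 2)).eval 0 *
              (∏ i : Fin (n - 1), ∏ j ∈ Finset.Ioi i, (U j - U i))) ∧
      Function.Injective U := by
  obtain ⟨m, rfl⟩ : ∃ m, n = m + 3 := ⟨n - 3, by omega⟩
  have h0 : U (0 : Fin (m + 2)) = Complex.I / (Real.sqrt 2 : ℂ) := by
    rw [hU]; simp
  have h1 : U (1 : Fin (m + 2)) = -(Complex.I / (Real.sqrt 2 : ℂ)) := by
    rw [hU]; simp
  have h2 : ∀ j : Fin m, U (j.succ.succ : Fin (m + 2)) = (y j : ℂ) := by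
    intro j
    rw [hU, dif_pos (by simp)]
    rfl
  have hinj : Function.Injective y := aux_inj m y hy
  have hs : 0 < (Real.sqrt 2)⁻¹ := by positivity
  have hI : Complex.I / (Real.sqrt 2 : ℂ) = Complex.I * ((Real.sqrt 2)⁻¹ : ℝ) := by
    push_cast; rfl
  refine ⟨fun x => ?_, ?_⟩
  · have hmain := aux_main m y hy U h0 h1 h2 x
    have hdet : (M x).det
        = ∑ k : Fin (m + 3), x ^ (k : ℕ) / ((k : ℂ) + 1) * cofU (N := m + 2) U k := by
      rw [hM]
      exact aux_det (N := m + 2) U (fun k => x ^ (k : ℕ) / ((k : ℂ) + 1))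
    rw [hdet]
    have e1 : ((m + 3 : ℕ) : ℂ) = (m : ℂ) + 3 := by push_cast; rfl
    have e2 : (m : ℂ) + 3 - 1 = m + 2 := by ring
    have e3 : (m : ℂ) + 3 - 2 = m + 1 := by ring
    rw [e1, e2, e3]
    exact hmain
  · have key : ∀ i j : Fin (m + 2), U i = U j → i = j := by
      intro i j
      refine Fin.cases ?_ (fun i => Fin.cases ?_ (fun i => ?_) i) i <;>
      refine Fin.cases ?_ (fun j => Fin.cases ?_ (fun j => ?_) j) j
      · intro _; rfl
      · intro h
        rw [show (Fin.succ 0 : Fin (m + 2)) = 1 from rfl, h0, h1, hI] at h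
        have := congrArg Complex.im h
        simp only [Complex.neg_im, Complex.re_mul_ofReal, Complex.im_mul_ofReal, Complex.I_im,
          Complex.ofReal_im, one_mul] at this
        exfalso
        linarith
      · intro h
        rw [h0, h2, hI] at h
        have := congrArg Complex.im h
        simp only [Complex.neg_im, Complex.re_mul_ofReal, Complex.im_mul_ofReal, Complex.I_im,
          Complex.ofReal_im, one_mul] at this
        exfalso
        linarith
      · intro h
        rw [show (Fin.succ 0 : Fin (m + 2)) = 1 from rfl, h0, h1, hI] at h
        have := congrArg Complex.im h
        simp only [Complex.neg_im, Complex.re_mul_ofReal, Complex.im_mul_ofReal, Complex.I_im,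
          Complex.ofReal_im, one_mul] at this
        exfalso
        linarith
      · intro _; rfl
      · intro h
        rw [show (Fin.succ 0 : Fin (m + 2)) = 1 from rfl, h1, h2, hI] at h
        have := congrArg Complex.im h
        simp only [Complex.neg_im, Complex.re_mul_ofReal, Complex.im_mul_ofReal, Complex.I_im,
          Complex.ofReal_im, one_mul] at this
        exfalso
        linarith
      · intro h
        rw [h0, h2, hI] at h
        have := congrArg Complex.im h
        simp only [Complex.neg_im, Complex.re_mul_ofReal, Complex.im_mul_ofReal, Complex.I_im,
          Complex.ofReal_im, one_mul] at this
        exfalso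
        linarith
      · intro h
        rw [show (Fin.succ 0 : Fin (m + 2)) = 1 from rfl, h1, h2, hI] at h
        have := congrArg Complex.im h
        simp only [Complex.neg_im, Complex.re_mul_ofReal, Complex.im_mul_ofReal, Complex.I_im,
          Complex.ofReal_im, one_mul] at this
        exfalso
        linarith
      · intro h
        rw [h2, h2] at h
        rw [hinj (Complex.ofReal_injective h)]
    exact key
end

section
/- Let m ∈ ℕ, let α > m−1, and let n ≥ m. Then the polynomial identity (d/dx)L^{II,(α)}_{m,n}(x) − L^{II,(α)}_{m,n}(x) = (α+n+1−2m)·L_m^{(−α−1)}(x)·L_{n−m}^{(α+1)}(x) holds for all x. -/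
open Finset

/-- Generalized binomial coefficient `C(t, j) = t(t-1)⋯(t-j+1)/j!`. -/
noncomputable def genBinom (t : ℝ) (j : ℕ) : ℝ :=
  (∏ i ∈ Finset.range j, (t - i)) / (Nat.factorial j)

/-- Generalized Laguerre polynomial `L_n^{(α)}(x)`, with the convention
`L_n^{(α)} = 0` for negative integer index `n`. -/
noncomputable def laguerre (α : ℝ) (n : ℤ) (x : ℝ) : ℝ :=
  if 0 ≤ n then
    ∑ k ∈ Finset.range (n.toNat + 1),
      ((-1 : ℝ) ^ k / (Nat.factorial k)) * genBinom ((n : ℝ) + α) (n.toNat - k) * x ^ k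
  else 0

/-- Type-II exceptional `X_m`-Laguerre polynomial. -/
noncomputable def XLagII (m : ℕ) (α : ℝ) (n : ℕ) (x : ℝ) : ℝ :=
  x * laguerre (-α - 1) (m : ℤ) x * laguerre (α + 2) ((n : ℤ) - m - 1) x
    + ((m : ℝ) - α - 1) * laguerre (-α - 2) (m : ℤ) x * laguerre (α + 1) ((n : ℤ) - m) x


lemma genBinom_succ' (t : ℝ) (j : ℕ) :
    ((j : ℝ) + 1) * genBinom t (j + 1) = (t - j) * genBinom t j := by
  unfold genBinom
  rw [Finset.prod_range_succ, Nat.factorial_succ]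
  have h : (Nat.factorial j : ℝ) ≠ 0 := by positivity
  have h2 : (j : ℝ) + 1 ≠ 0 := by positivity
  push_cast
  field_simp

lemma genBinom_shift (t : ℝ) (j : ℕ) :
    (t - j) * genBinom t j = t * genBinom (t - 1) j := by
  have key : (∏ i ∈ Finset.range j, (t - i)) * (t - j)
      = (∏ i ∈ Finset.range j, (t - 1 - i)) * t := by
    rw [← Finset.prod_range_succ (fun i : ℕ => t - (i : ℝ)), Finset.prod_range_succ']
    simp only [Nat.cast_zero, sub_zero]
    congr 1
    apply Finset.prod_congr rfl
    intro i _
    push_cast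
    ring
  unfold genBinom
  rw [← mul_div_assoc, ← mul_div_assoc, mul_comm (t - (j : ℝ)), key, mul_comm t]

/-- Coefficients of the Laguerre polynomial. -/
noncomputable def lagC (a : ℝ) (m k : ℕ) : ℝ :=
  if k ≤ m then ((-1 : ℝ) ^ k / (Nat.factorial k)) * genBinom ((m : ℝ) + a) (m - k) else 0

/-- The Laguerre polynomial as a polynomial. -/
noncomputable def lagP (a : ℝ) (m : ℕ) : Polynomial ℝ :=
  ∑ k ∈ Finset.range (m + 1), Polynomial.monomial k (lagC a m k)

lemma lagP_coeff (a : ℝ) (m k : ℕ) : (lagP a m).coeff k = lagC a m k := by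
  unfold lagP
  rw [Polynomial.finsetSum_coeff]
  simp only [Polynomial.coeff_monomial, Finset.sum_ite_eq', Finset.mem_range]
  split_ifs with h
  · rfl
  · unfold lagC
    rw [if_neg (by omega)]

lemma laguerre_eq (a : ℝ) (m : ℕ) (x : ℝ) : laguerre a (m : ℤ) x = (lagP a m).eval x := by
  unfold laguerre lagP
  rw [if_pos (Int.natCast_nonneg m), Polynomial.eval_finsetSum]
  simp only [Int.toNat_natCast, Polynomial.eval_monomial, Int.cast_natCast]
  apply Finset.sum_congr rfl
  intro k hk
  unfold lagC
  rw [if_pos (by have := Finset.mem_range.1 hk; omega)]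

lemma lagC_rec (a : ℝ) (m k : ℕ) :
    ((k : ℝ) + 1) * (k + a + 1) * lagC a m (k + 1) = -((m : ℝ) - k) * lagC a m k := by
  unfold lagC
  rcases lt_trichotomy k m with h | h | h
  · obtain ⟨j, rfl⟩ : ∃ j, m = k + 1 + j := ⟨m - (k + 1), by omega⟩
    rw [if_pos (by omega), if_pos (by omega)]
    have e1 : k + 1 + j - (k + 1) = j := by omega
    have e2 : k + 1 + j - k = j + 1 := by omega
    rw [e1, e2, Nat.factorial_succ]
    have hh := genBinom_succ' (((k + 1 + j : ℕ) : ℝ) + a) j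
    have h1 : (Nat.factorial k : ℝ) ≠ 0 := by positivity
    have h2 : (k : ℝ) + 1 ≠ 0 := by positivity
    push_cast at hh ⊢
    field_simp
    rw [pow_succ]
    linear_combination (-1 : ℝ) ^ k * hh
  · subst h
    simp
  · rw [if_neg (by omega), if_neg (by omega)]
    simp

lemma lagC_shift (a : ℝ) (m k : ℕ) :
    ((k : ℝ) + a) * lagC a m k = (m + a) * lagC (a - 1) m k := by
  unfold lagC
  split_ifs with h
  · have hh := genBinom_shift ((m : ℝ) + a) (m - k)
    rw [Nat.cast_sub h] at hh
    rw [show (m : ℝ) + (a - 1) = m + a - 1 by ring]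
    linear_combination ((-1 : ℝ) ^ k / (Nat.factorial k)) * hh
  · simp

lemma lagC_deriv (a : ℝ) (m k : ℕ) :
    lagC a (m + 1) (k + 1) * ((k : ℝ) + 1) = - lagC (a + 1) m k := by
  unfold lagC
  by_cases h : k ≤ m
  · rw [if_pos (by omega), if_pos h, Nat.factorial_succ]
    rw [show m + 1 - (k + 1) = m - k by omega]
    have h1 : (Nat.factorial k : ℝ) ≠ 0 := by positivity
    have h2 : (k : ℝ) + 1 ≠ 0 := by positivity
    push_cast
    rw [show (m : ℝ) + 1 + a = m + (a + 1) by ring]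
    field_simp
    ring
  · rw [if_neg (by omega), if_neg h]
    simp

open Polynomial in
lemma lagP_ode (a : ℝ) (m : ℕ) :
    X * derivative (derivative (lagP a m)) + C (a + 1) * derivative (lagP a m)
      - X * derivative (lagP a m) + C (m : ℝ) * lagP a m = 0 := by
  ext k
  rcases k with _ | k
  · have h := lagC_rec a m 0
    simp [coeff_derivative, lagP_coeff] at h ⊢
    linear_combination h
  · have h := lagC_rec a m (k + 1)
    simp only [coeff_add, coeff_sub, coeff_X_mul, coeff_C_mul, coeff_derivative, lagP_coeff,
      coeff_zero]
    push_cast at h ⊢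
    linear_combination h

open Polynomial in
lemma lagP_shift (a : ℝ) (m : ℕ) :
    X * derivative (lagP a m) + C a * lagP a m = C ((m : ℝ) + a) * lagP (a - 1) m := by
  ext k
  rcases k with _ | k
  · have h := lagC_shift a m 0
    simp [coeff_derivative, lagP_coeff, -map_add] at h ⊢
    linear_combination h
  · have h := lagC_shift a m (k + 1)
    simp only [coeff_add, coeff_X_mul, coeff_C_mul, coeff_derivative, lagP_coeff]
    push_cast at h ⊢
    linear_combination h

open Polynomial in
lemma lagP_deriv (a : ℝ) (m : ℕ) :
    derivative (lagP a (m + 1)) = - lagP (a + 1) m := by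
  ext k
  simp only [coeff_neg, coeff_derivative, lagP_coeff]
  exact lagC_deriv a m k

open Polynomial in
lemma laguerre_pred (a : ℝ) (N : ℕ) (x : ℝ) :
    laguerre (a + 1) ((N : ℤ) - 1) x = - (derivative (lagP a N)).eval x := by
  rcases N with _ | N
  · simp [laguerre, lagP]
  · rw [lagP_deriv, show (((N + 1 : ℕ) : ℤ) - 1) = (N : ℤ) by push_cast; ring, laguerre_eq]
    simp

open Polynomial in
theorem stmt15 (m : ℕ) (α : ℝ) (hα : (m : ℝ) - 1 < α) (n : ℕ) (hmn : m ≤ n) :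
    ∀ x : ℝ,
      deriv (XLagII m α n) x - XLagII m α n x =
        (α + n + 1 - 2 * m) * laguerre (-α - 1) (m : ℤ) x * laguerre (α + 1) ((n : ℤ) - m) x := by
  obtain ⟨N, rfl⟩ := Nat.exists_eq_add_of_le hmn
  have eN : (((m + N : ℕ) : ℤ) - m) = (N : ℤ) := by push_cast; ring
  set A := lagP (-α - 1) m with hA
  set Q := lagP (α + 1) N with hQ
  have hX : XLagII m α (m + N) = fun x =>
      (X * (derivative A * Q - A * derivative Q) + C (-α - 1) * (A * Q)).eval x := by
    funext x
    have hs := congrArg (eval x) (lagP_shift (-α - 1) m)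
    unfold XLagII
    rw [eN, show α + 2 = (α + 1) + 1 by ring, laguerre_pred, laguerre_eq, laguerre_eq, laguerre_eq,
      show -α - 2 = -α - 1 - 1 by ring]
    rw [← hA, ← hQ] at *
    simp only [eval_add, eval_sub, eval_mul, eval_X, eval_C] at hs ⊢
    linear_combination (-eval x Q) * hs
  intro x
  rw [hX, Polynomial.deriv, eN, laguerre_eq, laguerre_eq, ← hA, ← hQ]
  have h1 := congrArg (eval x) (lagP_ode (-α - 1) m)
  have h2 := congrArg (eval x) (lagP_ode (α + 1) N)
  rw [← hA] at h1
  rw [← hQ] at h2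
  simp only [derivative_add, derivative_sub, derivative_mul, derivative_X, derivative_C, eval_add,
    eval_sub, eval_mul, eval_X, eval_C, eval_one, eval_zero] at h1 h2 ⊢
  push_cast
  linear_combination eval x Q * h1 - eval x A * h2
end
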